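/- arXiv:1002.0110 — 2 statements merged into one kernel-verified Lean document; each statement's English description precedes it below -/
import Mathlib

section
/- Suppose 1 ≤ S < N and let x₀ ∈ X_S with ‖x₀‖₀ < S. Then every measurable unbiased estimator x̂ whose components are square-integrable with respect to P_{x₀} satisfies ε(x₀; x̂) ≥ N σ². -/
open MeasureTheory ProbabilityTheory Filter
open scoped ENNReal Classical

/-- The product Gaussian measure `P_x` on `ℝ^N` with mean `x` and variance `σ²` per coordinate. -/
noncomputable def gaussP (N : ℕ) (σ : ℝ) (x : Fin N → ℝ) : Measure (Fin N → ℝ) :=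
  MeasureTheory.Measure.pi fun i => gaussianReal (x i) (Real.toNNReal (σ ^ 2))

/-- The support of `x`: indices with nonzero entries. Its cardinality is `‖x‖₀`. -/
noncomputable def supp {N : ℕ} (x : Fin N → ℝ) : Finset (Fin N) :=
  Finset.univ.filter fun i => x i ≠ 0

/-- The sparse parameter set `X_S = {x : ‖x‖₀ ≤ S}`. -/
def sparseSet (N S : ℕ) : Set (Fin N → ℝ) := {x | (supp x).card ≤ S}

/-- An estimator is unbiased if each component is `P_x`-integrable with mean `x i`
for every `x ∈ X_S`. -/
def Unbiased (N S : ℕ) (σ : ℝ) (est : (Fin N → ℝ) → Fin N → ℝ) : Prop :=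
  ∀ x ∈ sparseSet N S, ∀ i,
    Integrable (fun y => est y i) (gaussP N σ x) ∧
    (∫ y, est y i ∂gaussP N σ x) = x i

/-- The MSE `ε(x; x̂) = ∫ ‖x̂(y) − x‖₂² dP_x(y)`, as an extended real. -/
noncomputable def MSE (N : ℕ) (σ : ℝ) (est : (Fin N → ℝ) → Fin N → ℝ)
    (x : Fin N → ℝ) : ℝ≥0∞ :=
  ∫⁻ y, ENNReal.ofReal (∑ i, (est y i - x i) ^ 2) ∂gaussP N σ x

/-!
Moving the mean of a Gaussian measure along a coordinate is the same as tilting it by a multiple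
`s` of that coordinate. Since `‖x₀‖₀ < S`, every coordinate of `x₀` may be perturbed freely within
`X_S`, so unbiasedness prescribes the mean of each component of the estimator under all these
tilts. Comparing this mean with its value at `s = 0` through the covariance with the density of
the tilt (Cauchy–Schwarz) gives `(σ² s)² ≤ Var · (exp (σ² s²) - 1)`, and `s → 0` yields
`σ² ≤ Var`. Under unbiasedness the MSE is the sum of these `N` variances.
-/

lemma le_of_forall_mul_le_mul_exp_sub_one {a b : ℝ}
    (h : ∀ u, 0 < u → a * u ≤ b * (Real.exp u - 1)) : a ≤ b := by
  have h_slope := ((Real.hasDerivAt_exp 0).tendsto_slope_zero_right).const_mul b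
  simp only [zero_add, Real.exp_zero, mul_one, smul_eq_mul] at h_slope
  refine ge_of_tendsto h_slope ?_
  filter_upwards [self_mem_nhdsWithin] with u hu
  have hu : 0 < u := hu
  calc a = u⁻¹ * (a * u) := by field_simp
    _ ≤ u⁻¹ * (b * (Real.exp u - 1)) := mul_le_mul_of_nonneg_left (h u hu) (by positivity)
    _ = b * (u⁻¹ * (Real.exp u - 1)) := by ring

section Tilting

variable {Ω : Type*} {mΩ : MeasurableSpace Ω} {μ : Measure Ω} {f g X : Ω → ℝ} {s : ℝ}

lemma covariance_sq_le_variance_mul_variance [IsFiniteMeasure μ] (hf : MemLp f 2 μ)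
    (hg : MemLp g 2 μ) : cov[f, g; μ] ^ 2 ≤ Var[f; μ] * Var[g; μ] := by
  have variance_add_mul (c : ℝ) :
      0 ≤ Var[g; μ] * (c * c) + 2 * cov[f, g; μ] * c + Var[f; μ] := by
    have h := variance_nonneg (fun ω ↦ f ω + c * g ω) μ
    rw [variance_fun_add hf (hg.const_mul c), variance_const_mul, covariance_const_mul_right] at h
    linarith
  have h := discrim_le_zero variance_add_mul
  rw [discrim] at h
  linarith

lemma covariance_exp_eq_integral_tilted_sub [IsProbabilityMeasure μ] (hf : MemLp f 2 μ)
    (hg : MemLp (fun ω ↦ Real.exp (g ω)) 2 μ) :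
    cov[f, fun ω ↦ Real.exp (g ω); μ]
      = μ[fun ω ↦ Real.exp (g ω)] * (∫ ω, f ω ∂μ.tilted g - μ[f]) := by
  have h_pos : 0 < μ[fun ω ↦ Real.exp (g ω)] := integral_exp_pos (hg.integrable one_le_two)
  have h_tilted : μ[fun ω ↦ Real.exp (g ω)] * ∫ ω, f ω ∂μ.tilted g
      = μ[f * fun ω ↦ Real.exp (g ω)] := by
    rw [integral_tilted, ← integral_const_mul]
    refine integral_congr_ae (ae_of_all _ fun ω ↦ ?_)
    simp only [smul_eq_mul, Pi.mul_apply]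
    field_simp
  rw [covariance_eq_sub hf hg, mul_sub, h_tilted, mul_comm (∫ ω, f ω ∂μ)]

lemma memLp_two_exp_mul (hX : AEMeasurable X μ)
    (h_int : Integrable (fun ω ↦ Real.exp (2 * s * X ω)) μ) :
    MemLp (fun ω ↦ Real.exp (s * X ω)) 2 μ := by
  rw [memLp_two_iff_integrable_sq (by fun_prop)]
  refine h_int.congr (ae_of_all _ fun ω ↦ ?_)
  simp only [← Real.exp_nat_mul, Nat.cast_ofNat, mul_assoc]

lemma variance_exp_mul_eq_mgf_sub [IsProbabilityMeasure μ] (hX : AEMeasurable X μ)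
    (h_int : Integrable (fun ω ↦ Real.exp (2 * s * X ω)) μ) :
    Var[fun ω ↦ Real.exp (s * X ω); μ] = mgf X μ (2 * s) - mgf X μ s ^ 2 := by
  rw [variance_eq_sub (memLp_two_exp_mul hX h_int)]
  simp only [mgf, Pi.pow_apply, ← Real.exp_nat_mul, Nat.cast_ofNat, mul_assoc]

/-- The **Hammersley–Chapman–Robbins inequality** for the exponential family generated by `X`. -/
lemma sq_mgf_mul_integral_tilted_sub_le [IsProbabilityMeasure μ] (hf : MemLp f 2 μ)
    (hX : AEMeasurable X μ) (h_int : Integrable (fun ω ↦ Real.exp (2 * s * X ω)) μ) :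
    (mgf X μ s * (∫ ω, f ω ∂μ.tilted (s * X ·) - μ[f])) ^ 2
      ≤ Var[f; μ] * (mgf X μ (2 * s) - mgf X μ s ^ 2) := by
  have h_exp := memLp_two_exp_mul hX h_int
  have h := covariance_sq_le_variance_mul_variance hf h_exp
  rwa [covariance_exp_eq_integral_tilted_sub hf h_exp, variance_exp_mul_eq_mgf_sub hX h_int] at h

end Tilting

section Gaussian

variable {Ω : Type*} {mΩ : MeasurableSpace Ω} {μ : Measure Ω} [IsProbabilityMeasure μ]
  {f X : Ω → ℝ} {m : ℝ} {v : NNReal}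

lemma sq_integral_tilted_sub_le_of_map_eq_gaussianReal (hf : MemLp f 2 μ)
    (hX : μ.map X = gaussianReal m v) (s : ℝ) :
    (∫ ω, f ω ∂μ.tilted (s * X ·) - μ[f]) ^ 2 ≤ Var[f; μ] * (Real.exp (v * s ^ 2) - 1) := by
  have hX_meas : AEMeasurable X μ := aemeasurable_of_map_neZero (by rw [hX]; infer_instance)
  have h_int : Integrable (fun ω ↦ Real.exp (2 * s * X ω)) μ := by
    rw [← mgf_pos_iff, mgf_gaussianReal hX]
    exact Real.exp_pos _
  have h_mgf : mgf X μ (2 * s) = mgf X μ s ^ 2 * Real.exp (v * s ^ 2) := by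
    rw [mgf_gaussianReal hX, mgf_gaussianReal hX, ← Real.exp_nat_mul, ← Real.exp_add]
    congr 1
    push_cast
    ring
  have h_pos : 0 < mgf X μ s := by
    rw [mgf_gaussianReal hX]
    exact Real.exp_pos _
  refine le_of_mul_le_mul_left ?_ (pow_pos h_pos 2)
  calc mgf X μ s ^ 2 * (∫ ω, f ω ∂μ.tilted (s * X ·) - μ[f]) ^ 2
      = (mgf X μ s * (∫ ω, f ω ∂μ.tilted (s * X ·) - μ[f])) ^ 2 := (mul_pow _ _ 2).symm
    _ ≤ Var[f; μ] * (mgf X μ (2 * s) - mgf X μ s ^ 2) :=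
      sq_mgf_mul_integral_tilted_sub_le hf hX_meas h_int
    _ = mgf X μ s ^ 2 * (Var[f; μ] * (Real.exp (v * s ^ 2) - 1)) := by rw [h_mgf]; ring

/-- The **Cramér–Rao inequality** for the mean of a Gaussian observation `X`: tilting by `s * X`
moves this mean from `m` to `m + v * s`, and `f` is an estimator following the move. -/
lemma le_evariance_of_integral_tilted_eq (hf : AEStronglyMeasurable f μ)
    (hX : μ.map X = gaussianReal m v)
    (h_mean : ∀ s, ∫ ω, f ω ∂μ.tilted (s * X ·) = μ[f] + v * s) :
    (v : ℝ≥0∞) ≤ eVar[f; μ] := by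
  by_cases hf_sq : MemLp f 2 μ
  swap
  · simp [evariance_eq_top hf hf_sq]
  rcases eq_zero_or_pos v with rfl | hv_pos
  · simp
  rw [← ofReal_variance hf_sq, ← ENNReal.ofReal_coe_nnreal]
  refine ENNReal.ofReal_le_ofReal (le_of_forall_mul_le_mul_exp_sub_one fun u hu ↦ ?_)
  have hv : (0 : ℝ) < v := NNReal.coe_pos.2 hv_pos
  have hvs : v * √(u / v) ^ 2 = u := by
    rw [Real.sq_sqrt (div_nonneg hu.le hv.le), mul_div_cancel₀ _ hv.ne']
  have h := sq_integral_tilted_sub_le_of_map_eq_gaussianReal hf_sq hX √(u / v)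
  rw [h_mean, add_sub_cancel_left, hvs] at h
  calc v * u = (v * √(u / v)) ^ 2 := by rw [mul_pow, sq (v : ℝ), mul_assoc, hvs]
    _ ≤ Var[f; μ] * (Real.exp u - 1) := h

end Gaussian

lemma gaussianReal_tilted (m : ℝ) (v : NNReal) (s : ℝ) :
    (gaussianReal m v).tilted (s * ·) = gaussianReal (m + v * s) v := by
  rcases eq_or_ne v 0 with rfl | hv
  · simp [gaussianReal_zero_var, Measure.tilted, dirac_withDensity]
  have h_norm : ∫ y, Real.exp (s * y) ∂gaussianReal m v = Real.exp (m * s + v * s ^ 2 / 2) :=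
    mgf_gaussianReal (X := fun y ↦ y) (by simp) s
  rw [Measure.tilted, h_norm, gaussianReal_of_var_ne_zero _ hv, gaussianReal_of_var_ne_zero _ hv,
    ← withDensity_mul _ (measurable_gaussianPDF _ _) (by fun_prop)]
  congr 1
  ext y
  rw [Pi.mul_apply, gaussianPDF, gaussianPDF,
    ← ENNReal.ofReal_mul (gaussianPDFReal_nonneg _ _ _), gaussianPDFReal, gaussianPDFReal,
    ← Real.exp_sub, mul_assoc, ← Real.exp_add]
  congr 3
  field_simp
  ring

lemma pi_tilted {ι : Type*} [Fintype ι] {E : ι → Type*} [∀ i, MeasurableSpace (E i)]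
    (μ : ∀ i, Measure (E i)) [∀ i, SigmaFinite (μ i)] (f : ∀ i, E i → ℝ) :
    Measure.pi (fun i ↦ (μ i).tilted (f i))
      = (Measure.pi μ).tilted fun y ↦ ∑ i, f i (y i) := by
  refine Measure.pi_eq fun t _ ↦ ?_
  have h_exp (y : ∀ i, E i) : Real.exp (∑ i, f i (y i)) / ∏ i, ∫ z, Real.exp (f i z) ∂μ i
      = ∏ i, Real.exp (f i (y i)) / ∫ z, Real.exp (f i z) ∂μ i := by
    rw [Real.exp_sum, Finset.prod_div_distrib]
  have h_norm : ∫ y, Real.exp (∑ i, f i (y i)) ∂Measure.pi μ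
      = ∏ i, ∫ z, Real.exp (f i z) ∂μ i := by
    simp_rw [Real.exp_sum]
    exact integral_fintype_prod_eq_prod fun i z ↦ Real.exp (f i z)
  simp_rw [tilted_apply_eq_ofReal_integral, h_norm, h_exp]
  rw [Measure.restrict_pi_pi,
    integral_fintype_prod_eq_prod fun i z ↦ Real.exp (f i z) / ∫ z, Real.exp (f i z) ∂μ i,
    ENNReal.ofReal_prod_of_nonneg fun i _ ↦ by positivity]

section SparseSignalInNoise

variable {N S : ℕ} {σ : ℝ} {x : Fin N → ℝ} {est : (Fin N → ℝ) → Fin N → ℝ}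

instance isProbabilityMeasure_gaussP : IsProbabilityMeasure (gaussP N σ x) :=
  inferInstanceAs (IsProbabilityMeasure (Measure.pi _))

lemma map_eval_gaussP (i : Fin N) :
    (gaussP N σ x).map (fun y ↦ y i) = gaussianReal (x i) (σ ^ 2).toNNReal :=
  (measurePreserving_eval _ i).map_eq

lemma gaussP_tilted (d : Fin N → ℝ) :
    (gaussP N σ x).tilted (fun y ↦ ∑ i, d i * y i) = gaussP N σ (x + σ ^ 2 • d) := by
  simp_rw [gaussP, ← pi_tilted _ fun i y ↦ d i * y, gaussianReal_tilted,
    Real.coe_toNNReal _ (sq_nonneg σ), Pi.add_apply, Pi.smul_apply, smul_eq_mul]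

lemma gaussP_tilted_eval (i : Fin N) (s : ℝ) :
    (gaussP N σ x).tilted (fun y ↦ s * y i) = gaussP N σ (x + Pi.single i (σ ^ 2 * s)) := by
  have h := gaussP_tilted (σ := σ) (x := x) (Pi.single i s)
  rw [← Pi.single_smul, smul_eq_mul] at h
  simpa [Pi.single_apply] using h

lemma add_single_mem_sparseSet (hx : (supp x).card < S) (i : Fin N) (a : ℝ) :
    x + Pi.single i a ∈ sparseSet N S := by
  have h_sub : supp (x + Pi.single i a) ⊆ insert i (supp x) := by
    intro j hj
    by_cases h : j = i
    · simp [h]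
    · simpa [supp, h] using hj
  calc (supp (x + Pi.single i a)).card ≤ (insert i (supp x)).card := Finset.card_le_card h_sub
    _ ≤ (supp x).card + 1 := Finset.card_insert_le i (supp x)
    _ ≤ S := hx

lemma Unbiased.le_evariance (h : Unbiased N S σ est) (hx : (supp x).card < S) (i : Fin N) :
    ENNReal.ofReal (σ ^ 2) ≤ eVar[fun y ↦ est y i; gaussP N σ x] := by
  obtain ⟨h_int, h_mean⟩ := h x hx.le i
  refine le_evariance_of_integral_tilted_eq h_int.1 (map_eval_gaussP i) fun s ↦ ?_
  rw [gaussP_tilted_eval, (h _ (add_single_mem_sparseSet hx i _) i).2, h_mean,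
    Pi.add_apply, Pi.single_eq_same, Real.coe_toNNReal _ (sq_nonneg σ)]

lemma Unbiased.MSE_eq_sum_evariance (h : Unbiased N S σ est) (hx : x ∈ sparseSet N S) :
    MSE N σ est x = ∑ i, eVar[fun y ↦ est y i; gaussP N σ x] := by
  have h_meas (i : Fin N) : AEMeasurable (fun y ↦ est y i) (gaussP N σ x) :=
    (h x hx i).1.aemeasurable
  simp_rw [MSE, evariance_eq_lintegral_ofReal, (h x hx _).2,
    ENNReal.ofReal_sum_of_nonneg fun _ _ ↦ sq_nonneg _]
  exact lintegral_finsetSum' _ fun i _ ↦ by fun_prop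

end SparseSignalInNoise

theorem stmt_4_general (N S : ℕ) (σ : ℝ) (x₀ : Fin N → ℝ) (hcard : (supp x₀).card < S)
    (est : (Fin N → ℝ) → Fin N → ℝ) (hunb : Unbiased N S σ est) :
    ENNReal.ofReal ((N : ℝ) * σ ^ 2) ≤ MSE N σ est x₀ :=
  calc ENNReal.ofReal ((N : ℝ) * σ ^ 2) = ∑ _i : Fin N, ENNReal.ofReal (σ ^ 2) := by
        simp [ENNReal.ofReal_mul]
    _ ≤ ∑ i, eVar[fun y ↦ est y i; gaussP N σ x₀] :=
        Finset.sum_le_sum fun i _ ↦ hunb.le_evariance hcard i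
    _ = MSE N σ est x₀ := (hunb.MSE_eq_sum_evariance hcard.le).symm

/-- Lower bound for `‖x₀‖₀ < S`: `ε(x₀; x̂) ≥ N σ²`. -/
theorem stmt_4 (N S : ℕ) (σ : ℝ) (hσ : 0 < σ) (hS : 1 ≤ S) (hSN : S < N)
    (x₀ : Fin N → ℝ) (hcard : (supp x₀).card < S)
    (est : (Fin N → ℝ) → Fin N → ℝ) (hmeas : Measurable est)
    (hunb : Unbiased N S σ est)
    (hsq : ∀ i, Integrable (fun y => (est y i) ^ 2) (gaussP N σ x₀)) :
    ENNReal.ofReal ((N : ℝ) * σ ^ 2) ≤ MSE N σ est x₀ :=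
  stmt_4_general N S σ x₀ hcard est hunb
end

section
/- Suppose 1 ≤ S < N and let x₀ ∈ X_S with ‖x₀‖₀ = S. Then the estimator x̂_c (defined componentwise by (x̂_c(y))_k = y_k for k ∈ supp(x₀) and (x̂_c(y))_k = y_k · (1 − ∏_{l ∈ supp(x₀)} tanh(y_l x₀_l / σ²)) for k ∉ supp(x₀)) is unbiased: for every x ∈ X_S and every index k, the function y ↦ (x̂_c(y))_k is P_x-integrable and ∫ (x̂_c(y))_k dP_x(y) = x_k. -/
open MeasureTheory ProbabilityTheory Filter
open scoped ENNReal Classical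

/-- The constrained estimator `x̂_c`: identity on `supp(x₀)`, and
`y_k (1 − ∏_{l ∈ supp(x₀)} tanh(y_l x₀_l/σ²))` off the support. -/
noncomputable def estC (N : ℕ) (σ : ℝ) (x₀ : Fin N → ℝ) (y : Fin N → ℝ) (k : Fin N) : ℝ :=
  if k ∈ supp x₀ then y k
  else y k * (1 - ∏ l ∈ supp x₀, Real.tanh (y l * x₀ l / σ ^ 2))

/-!
Off the support of `x₀`, the estimator subtracts `y k * ∏ l ∈ supp x₀, tanh (y l * x₀ l / σ ^ 2)`
from the unbiased `y k`. The coordinates are independent, so the mean of this correction is a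
product of one-dimensional means, and an odd function has mean zero under a centered Gaussian. If
`x` has at most as many nonzero entries as `x₀` and `k ∉ supp x₀`, then `x` cannot be nonzero at `k`
and on all of `supp x₀`, so one of the factors vanishes.
-/

section FinitelyManyCoordinates

variable {ι : Type*}

lemma prod_insert_update_apply {M : Type*} [CommMonoid M] [DecidableEq ι] {α : ι → Type*}
    (F : ∀ i, α i → M) {s : Finset ι} {k : ι} (hk : k ∉ s) (f : ∀ i, α i) (g : α k) :
    ∏ i ∈ insert k s, F i (Function.update f k g i) = F k g * ∏ i ∈ s, F i (f i) := by
  rw [Finset.prod_insert hk, Function.update_self]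
  congr 1
  refine Finset.prod_congr rfl fun i hi => ?_
  rw [Function.update_of_ne (ne_of_mem_of_not_mem hi hk)]

variable [Fintype ι] {E : ι → Type*} [∀ i, MeasurableSpace (E i)] {μ : ∀ i, Measure (E i)}

lemma integrable_finset_prod_eval {R : Type*} [NormedCommRing R] [∀ i, IsFiniteMeasure (μ i)]
    {s : Finset ι} {f : ∀ i, E i → R} (hf : ∀ i ∈ s, Integrable (f i) (μ i)) :
    Integrable (fun y => ∏ i ∈ s, f i (y i)) (Measure.pi μ) := by
  classical
  simp_rw [← Fintype.prod_ite_mem s]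
  refine Integrable.fintype_prod_dep (f := fun i t => if i ∈ s then f i t else 1) fun i => ?_
  by_cases hi : i ∈ s
  · simpa only [if_pos hi] using hf i hi
  · simpa only [if_neg hi] using integrable_const 1

lemma integral_finset_prod_eval {𝕜 : Type*} [RCLike 𝕜] [∀ i, IsProbabilityMeasure (μ i)]
    (s : Finset ι) (f : ∀ i, E i → 𝕜) :
    ∫ y, ∏ i ∈ s, f i (y i) ∂Measure.pi μ = ∏ i ∈ s, ∫ t, f i t ∂μ i := by
  classical
  simp_rw [← Fintype.prod_ite_mem s]
  rw [integral_fintype_prod_eq_prod fun i t => if i ∈ s then f i t else 1]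
  refine Finset.prod_congr rfl fun i _ => ?_
  split_ifs <;> simp

lemma integrable_eval_mul_finset_prod_eval {R : Type*} [NormedCommRing R]
    [∀ i, IsFiniteMeasure (μ i)] {s : Finset ι} {k : ι} (hk : k ∉ s) {f : ∀ i, E i → R}
    {g : E k → R} (hg : Integrable g (μ k)) (hf : ∀ i ∈ s, Integrable (f i) (μ i)) :
    Integrable (fun y => g (y k) * ∏ i ∈ s, f i (y i)) (Measure.pi μ) := by
  have hprod (y : ∀ i, E i) := prod_insert_update_apply (fun i (h : E i → R) => h (y i)) hk f g
  simp_rw [← hprod]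
  refine integrable_finset_prod_eval fun i hi => ?_
  obtain rfl | hi := Finset.mem_insert.mp hi
  · rwa [Function.update_self]
  · rw [Function.update_of_ne (ne_of_mem_of_not_mem hi hk)]
    exact hf i hi

lemma integral_eval_mul_finset_prod_eval {𝕜 : Type*} [RCLike 𝕜] [∀ i, IsProbabilityMeasure (μ i)]
    {s : Finset ι} {k : ι} (hk : k ∉ s) (f : ∀ i, E i → 𝕜) (g : E k → 𝕜) :
    ∫ y, g (y k) * ∏ i ∈ s, f i (y i) ∂Measure.pi μ
      = (∫ t, g t ∂μ k) * ∏ i ∈ s, ∫ t, f i t ∂μ i := by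
  have hprod (y : ∀ i, E i) := prod_insert_update_apply (fun i (h : E i → 𝕜) => h (y i)) hk f g
  simp_rw [← hprod]
  rw [integral_finset_prod_eval]
  exact prod_insert_update_apply (fun i (h : E i → 𝕜) => ∫ t, h t ∂μ i) hk f g

end FinitelyManyCoordinates

lemma integral_eq_zero_of_odd {G F : Type*} [MeasurableSpace G] [AddGroup G] [MeasurableNeg G]
    [NormedAddCommGroup F] [NormedSpace ℝ F] (μ : Measure G) [μ.IsNegInvariant] {f : G → F}
    (hf : f.Odd) : ∫ t, f t ∂μ = 0 := by
  have h : ∫ t, f t ∂μ = -∫ t, f t ∂μ :=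
    calc ∫ t, f t ∂μ = ∫ t, f (-t) ∂μ := (integral_neg_eq_self f μ).symm
      _ = -∫ t, f t ∂μ := by simp_rw [hf.eq, integral_neg]
  have : IsAddTorsionFree F := .of_isTorsionFree ℝ F
  exact self_eq_neg.mp h

instance isNegInvariant_gaussianReal_zero (v : NNReal) : (gaussianReal 0 v).IsNegInvariant :=
  ⟨gaussianReal_map_neg.trans (by rw [neg_zero])⟩

lemma integrable_id_gaussianReal (m : ℝ) (v : NNReal) :
    Integrable (fun t => t) (gaussianReal m v) :=
  memLp_one_iff_integrable.mp (memLp_id_gaussianReal 1)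

lemma continuous_tanh : Continuous Real.tanh := by
  rw [funext Real.tanh_eq_sinh_div_cosh]
  exact Real.continuous_sinh.div Real.continuous_cosh fun t => (Real.cosh_pos t).ne'

lemma integrable_tanh_comp {Ω : Type*} [MeasurableSpace Ω] {μ : Measure Ω} [IsFiniteMeasure μ]
    {f : Ω → ℝ} (hf : AEMeasurable f μ) : Integrable (fun ω => Real.tanh (f ω)) μ :=
  .of_bound (continuous_tanh.measurable.comp_aemeasurable hf).aestronglyMeasurable 1
    (.of_forall fun ω => (Real.abs_tanh_lt_one (f ω)).le)

section SparseGaussianModel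

variable {N : ℕ}

lemma mem_supp {x : Fin N → ℝ} {i : Fin N} : i ∈ supp x ↔ x i ≠ 0 := by
  simp only [supp, Finset.mem_filter, Finset.mem_univ, true_and]

lemma eq_zero_or_exists_mem_eq_zero_of_card_supp_le {x : Fin N → ℝ} {A : Finset (Fin N)}
    {k : Fin N} (hcard : (supp x).card ≤ A.card) (hk : k ∉ A) :
    x k = 0 ∨ ∃ l ∈ A, x l = 0 := by
  by_contra! ⟨hxk, hxA⟩
  have hsub : A ⊆ supp x := fun l hl => mem_supp.mpr (hxA l hl)
  exact hk (Finset.eq_of_subset_of_card_le hsub hcard ▸ mem_supp.mpr hxk)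

variable (σ : ℝ) (x : Fin N → ℝ) (k : Fin N)

lemma integrable_eval_gaussP : Integrable (fun y => y k) (gaussP N σ x) :=
  integrable_eval (integrable_id_gaussianReal _ _)

lemma integral_eval_gaussP : ∫ y, y k ∂gaussP N σ x = x k :=
  integral_eval.trans integral_id_gaussianReal

variable {k} {A : Finset (Fin N)} {φ : Fin N → ℝ → ℝ}

lemma integral_eval_mul_prod_odd_gaussP (hk : k ∉ A) (hodd : ∀ l ∈ A, (φ l).Odd)
    (hx : x k = 0 ∨ ∃ l ∈ A, x l = 0) :
    ∫ y, y k * ∏ l ∈ A, φ l (y l) ∂gaussP N σ x = 0 := by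
  rw [gaussP, integral_eval_mul_finset_prod_eval hk φ fun t => t, integral_id_gaussianReal]
  obtain hxk | ⟨l, hl, hxl⟩ := hx
  · rw [hxk, zero_mul]
  · have hφl : ∫ t, φ l t ∂gaussianReal (x l) (Real.toNNReal (σ ^ 2)) = 0 := by
      rw [hxl]
      exact integral_eq_zero_of_odd _ (hodd l hl)
    rw [Finset.prod_eq_zero hl hφl, mul_zero]

end SparseGaussianModel

theorem stmt_6_general (N S : ℕ) (σ : ℝ) (A : Finset (Fin N)) (hA : S ≤ A.card)
    (φ : Fin N → ℝ → ℝ) (hodd : ∀ l ∈ A, (φ l).Odd)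
    (hint : ∀ l ∈ A, ∀ m, Integrable (φ l) (gaussianReal m (Real.toNNReal (σ ^ 2)))) :
    Unbiased N S σ fun y k => if k ∈ A then y k else y k * (1 - ∏ l ∈ A, φ l (y l)) := by
  intro x hx k
  have hid := integrable_eval_gaussP σ x k
  by_cases hk : k ∈ A
  · simpa only [if_pos hk] using ⟨hid, integral_eval_gaussP σ x k⟩
  have hcorr : Integrable (fun y => y k * ∏ l ∈ A, φ l (y l)) (gaussP N σ x) :=
    integrable_eval_mul_finset_prod_eval hk (integrable_id_gaussianReal _ _)
      fun l hl => hint l hl (x l)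
  have hzero : x k = 0 ∨ ∃ l ∈ A, x l = 0 :=
    eq_zero_or_exists_mem_eq_zero_of_card_supp_le (hx.trans hA) hk
  simp only [if_neg hk, mul_sub, mul_one]
  refine ⟨hid.sub hcorr, ?_⟩
  rw [integral_sub hid hcorr, integral_eval_gaussP,
    integral_eval_mul_prod_odd_gaussP σ x hk hodd hzero, sub_zero]

/-- The constrained estimator `x̂_c` is unbiased. -/
theorem stmt_6 (N S : ℕ) (σ : ℝ) (hσ : 0 < σ) (hS : 1 ≤ S) (hSN : S < N)
    (x₀ : Fin N → ℝ) (hcard : (supp x₀).card = S) :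
    Unbiased N S σ (estC N σ x₀) := by
  exact stmt_6_general N S σ (supp x₀) hcard.ge (fun l t => Real.tanh (t * x₀ l / σ ^ 2))
    (fun l _ t => by simp only [neg_mul, neg_div, Real.tanh_neg])
    (fun l _ m => integrable_tanh_comp (by fun_prop))
end
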